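/- Let q = p^m ≡ 5 (mod 8) be a prime power with primitive element α of F_q, let q = s² + t² be the Katre–Rajwade-normalized representation with t = ±2, and let D = C_0^4 ∪ C_3^4. Then: (i) F_q^*∖D = −D = C_1^4 ∪ C_2^4 is a Paley skew PDS corresponding to the Paley PDS C_0^2 if t = −2 and to C_1^2 if t = 2; (ii) F_q∖D = C_1^4 ∪ C_2^4 ∪ {0} is a skew PDS corresponding to the (q,(q+1)/2,(q+3)/4,(q−1)/4)-PDS C_1^2 ∪ {0} if t = −2 and to the (q,(q+1)/2,(q+3)/4,(q−1)/4)-PDS C_0^2 ∪ {0} if t = 2. -/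

import Mathlib

open Finset

section Defs

variable {G : Type*} [AddCommGroup G] [Fintype G] [DecidableEq G]

/-- The multiset `Δ(D)` of internal differences `x - y` (for `x ≠ y` in `D`). -/
def intDiff (D : Finset G) : Multiset G :=
  ((D ×ˢ D).filter (fun p => p.1 ≠ p.2)).val.map (fun p => p.1 - p.2)

/-- The multiset `Δ(D, E)` of external differences `x - y` for `x ∈ D`, `y ∈ E`. -/
def extDiff (D E : Finset G) : Multiset G :=
  (D ×ˢ E).val.map (fun p => p.1 - p.2)

/-- The finset `G^*` of nonzero elements of `G`. -/
def Gstar (G : Type*) [AddCommGroup G] [Fintype G] [DecidableEq G] : Finset G :=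
  Finset.univ.erase 0

/-- `A` is a `(v, k, lam, mu)` partial difference set in `G`:
`Δ(A) = lam • A^* + mu • (G^* \ A)`. -/
def IsPDS (A : Finset G) (v k lam mu : ℕ) : Prop :=
  Fintype.card G = v ∧ A.card = k ∧
    intDiff A = lam • (A.erase 0).val + mu • (Gstar G \ A).val

/-- `D` is a `(v, k, lam, mu)` skew partial difference set corresponding to the
`(v, k, lam, mu)`-PDS `A`: `Δ(D) = lam • A^* + mu • (G^* \ A)`. -/
def IsSkewPDS (D A : Finset G) (v k lam mu : ℕ) : Prop :=
  IsPDS A v k lam mu ∧ D.card = k ∧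
    intDiff D = lam • (A.erase 0).val + mu • (Gstar G \ A).val

/-- `D` is an `(n, m, k₁, …, k_m; lam, mu)` disjoint partial difference family relative
to `T`: the `D i` are pairwise disjoint subsets of `G^*` of sizes `k i`, and
`∑ i, Δ(D i) = lam • T + mu • (G^* \ T)`. -/
def IsDPDF {ι : Type*} [Fintype ι] (D : ι → Finset G) (n m : ℕ) (k : ι → ℕ)
    (T : Finset G) (lam mu : ℕ) : Prop :=
  Fintype.card G = n ∧ Fintype.card ι = m ∧
    (∀ i, (0 : G) ∉ D i) ∧ (∀ i, (D i).card = k i) ∧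
    (Pairwise (fun i j => Disjoint (D i) (D j))) ∧
    ∑ i, intDiff (D i) = lam • T.val + mu • (Gstar G \ T).val

/-- `D` is an `(n, m, k₁, …, k_m; lam, mu)` external partial difference family relative
to `T`: the `D i` are pairwise disjoint subsets of `G^*` of sizes `k i`, and
`∑_{i ≠ j}, Δ(D i, D j) = lam • T + mu • (G^* \ T)`. -/
def IsEPDF {ι : Type*} [Fintype ι] [DecidableEq ι] (D : ι → Finset G) (n m : ℕ)
    (k : ι → ℕ) (T : Finset G) (lam mu : ℕ) : Prop :=
  Fintype.card G = n ∧ Fintype.card ι = m ∧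
    (∀ i, (0 : G) ∉ D i) ∧ (∀ i, (D i).card = k i) ∧
    (Pairwise (fun i j => Disjoint (D i) (D j))) ∧
    ∑ i, ∑ j ∈ Finset.univ.erase i, extDiff (D i) (D j)
      = lam • T.val + mu • (Gstar G \ T).val

/-- `D` is an `(n, m, k₁, …, k_m, lam)` disjoint difference family:
`∑ i, Δ(D i) = lam • G^*`. -/
def IsDDF {ι : Type*} [Fintype ι] (D : ι → Finset G) (n m : ℕ) (k : ι → ℕ)
    (lam : ℕ) : Prop :=
  Fintype.card G = n ∧ Fintype.card ι = m ∧
    (∀ i, (0 : G) ∉ D i) ∧ (∀ i, (D i).card = k i) ∧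
    (Pairwise (fun i j => Disjoint (D i) (D j))) ∧
    ∑ i, intDiff (D i) = lam • (Gstar G).val

/-- `D` is an `(n, m, k₁, …, k_m, lam)` external difference family:
`∑_{i ≠ j}, Δ(D i, D j) = lam • G^*`. -/
def IsEDF {ι : Type*} [Fintype ι] [DecidableEq ι] (D : ι → Finset G) (n m : ℕ)
    (k : ι → ℕ) (lam : ℕ) : Prop :=
  Fintype.card G = n ∧ Fintype.card ι = m ∧
    (∀ i, (0 : G) ∉ D i) ∧ (∀ i, (D i).card = k i) ∧
    (Pairwise (fun i j => Disjoint (D i) (D j))) ∧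
    ∑ i, ∑ j ∈ Finset.univ.erase i, extDiff (D i) (D j) = lam • (Gstar G).val

end Defs

section Cyclotomy

variable {F : Type*} [Field F] [Fintype F] [DecidableEq F]

/-- The cyclotomic class `C_i^e = α^i ⟨α^e⟩` of order `e` in the finite field `F`,
with respect to the primitive element `α`.  (Since `α` has multiplicative order at most
`|F| - 1`, letting `j` range over `0, …, |F| - 1` captures the whole class.) -/
def cycClass (α : F) (e i : ℕ) : Finset F :=
  (Finset.range (Fintype.card F)).image (fun j => α ^ (e * j + i))

/-- `α` is a primitive element of the finite field `F`: every nonzero element of `F`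
is a power of `α`. -/
def IsPrimitiveElt (α : F) : Prop :=
  ∀ x : F, x ≠ 0 → ∃ n : ℕ, α ^ n = x

end Cyclotomy

/-!
Differences are counted by correlating sign functions: the sign function of `C_0^2` is the quadratic
character `η`, and that of `C_1^4 ∪ C_2^4` is `Im χ - Re χ`, where `χ` is the quartic character with
`χ α = i`. Evaluating the correlations by Jacobi sums, `C_1^4 ∪ C_2^4` has the same multiset of
differences as `C_0^2` or `C_1^2` exactly when `Im J = -2` or `Im J = 2`, for `J = J(χ, χ)`.

It remains to see that `Im J = t`. The norm of `J` is `q`, and since `χ - 1` is divisible by `i - 1`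
on `F^*`, pairing `x` with `1 - x` in `J` determines `J` modulo `2(i - 1)`, so that `Re J ≡ 3` and
`Im J ≡ 2` modulo `4`. Under the ring homomorphism `ℤ[i] → F` with `i ↦ α^(3(q-1)/4)`, the sum `J`
becomes `∑ x, x^(3k) (1 - x)^(3k)` with `k = (q - 1) / 4`, up to sign the binomial coefficient
`(3k choose k)`, nonzero modulo `p` by Lucas' theorem. This singles out `J` among the Gaussian
integers of norm `q` in that congruence class.
-/

section Differences

variable {G : Type*} [AddCommGroup G] [DecidableEq G]

lemma count_intDiff (D : Finset G) {d : G} (hd : d ≠ 0) :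
    (intDiff D).count d = #{x ∈ D | x - d ∈ D} := by
  rw [intDiff, Multiset.count_map, ← Finset.filter_val, Finset.card_val]
  refine Finset.card_nbij' (fun y ↦ y.1) (fun x ↦ (x, x - d)) ?_ ?_ ?_ ?_
  · rintro ⟨x, y⟩ h
    obtain ⟨⟨⟨hx, hy⟩, -⟩, rfl⟩ : ((x ∈ D ∧ y ∈ D) ∧ x ≠ y) ∧ d = x - y := by simpa using h
    simp [hx, hy]
  · intro x hx
    simpa [hd, eq_comm (a := x)] using hx
  · rintro ⟨x, y⟩ h
    have : d = x - y := by simp_all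
    simp [this]
  · exact fun _ _ ↦ rfl

lemma zero_notMem_intDiff (D : Finset G) : 0 ∉ intDiff D := by
  simp only [intDiff, Multiset.mem_map, Finset.mem_val, mem_filter, mem_product, not_exists,
    not_and, and_imp, Prod.forall]
  exact fun x y _ _ hxy ↦ sub_ne_zero.2 hxy

lemma intDiff_image_neg (D : Finset G) : intDiff (D.image (fun x ↦ -x)) = intDiff D := by
  have mem_neg (x : G) : x ∈ D.image (fun x ↦ -x) ↔ -x ∈ D := by
    simp [neg_eq_iff_eq_neg]
  ext d
  by_cases hd : d = 0
  · rw [hd, Multiset.count_eq_zero.2 (zero_notMem_intDiff _),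
      Multiset.count_eq_zero.2 (zero_notMem_intDiff _)]
  · rw [count_intDiff _ hd, count_intDiff _ hd]
    refine Finset.card_equiv (Equiv.subLeft d) fun x ↦ ?_
    simp [mem_neg, and_comm]

/-- The `±1`-valued indicator function of `D` on `G \ {0}`, extended by `0` at `0`. It linearizes
the counting of differences in `D`, and for unions of cyclotomic classes it is expressed through
multiplicative characters. -/
def signFun (D : Finset G) (x : G) : ℤ := if x = 0 then 0 else if x ∈ D then 1 else -1

lemma two_mul_indicator_eq {D : Finset G} (h0 : 0 ∉ D) (x : G) :
    (2 * if x ∈ D then 1 else 0 : ℤ) = signFun D x + 1 - if x = 0 then 1 else 0 := by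
  by_cases hx : x = 0
  · simp [signFun, hx, h0]
  · by_cases hD : x ∈ D <;> simp [signFun, hx, hD]

variable [Fintype G]

lemma intDiff_eq_iff (D A : Finset G) (lam mu : ℕ) :
    intDiff D = lam • (A.erase 0).val + mu • (Gstar G \ A).val ↔
      ∀ d ≠ 0, (intDiff D).count d = if d ∈ A then lam else mu := by
  have count_rhs (d : G) : (lam • (A.erase 0).val + mu • (Gstar G \ A).val).count d =
      if d = 0 then 0 else if d ∈ A then lam else mu := by
    rw [Multiset.count_add, Multiset.count_nsmul, Multiset.count_nsmul,
      Multiset.count_eq_of_nodup (Finset.nodup _), Multiset.count_eq_of_nodup (Finset.nodup _)]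
    simp only [Finset.mem_val]
    by_cases hd : d = 0 <;> by_cases hA : d ∈ A <;> simp [Gstar, hd, hA]
  rw [Multiset.ext]
  refine forall_congr' fun d ↦ ?_
  rw [count_rhs]
  by_cases hd : d = 0
  · simp [hd, Multiset.count_eq_zero.2 (zero_notMem_intDiff D)]
  · simp [hd]

lemma count_intDiff_compl (D : Finset G) {d : G} (hd : d ≠ 0) :
    (intDiff Dᶜ).count d + 2 * #D = (intDiff D).count d + Fintype.card G := by
  set T : Finset G := D.map (Equiv.addRight d).toEmbedding with hT
  have mem_T (x : G) : x ∈ T ↔ x - d ∈ D := by simp [hT, sub_eq_add_neg]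
  have inter_eq : {x ∈ D | x - d ∈ D} = D ∩ T := by ext x; simp [mem_T]
  have compl_eq : {x ∈ Dᶜ | x - d ∈ Dᶜ} = (D ∪ T)ᶜ := by ext x; simp [mem_T]
  have card_T : #T = #D := card_map _
  have := card_union_add_card_inter D T
  have := card_add_card_compl (D ∪ T)
  rw [count_intDiff _ hd, count_intDiff _ hd, inter_eq, compl_eq]
  lia

variable {D A : Finset G} {v k lam mu : ℕ}

lemma IsSkewPDS.neg (h : IsSkewPDS D A v k lam mu) :
    IsSkewPDS (D.image (fun x ↦ -x)) A v k lam mu := by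
  obtain ⟨hA, hcard, hD⟩ := h
  exact ⟨hA, by rw [card_image_of_injective _ neg_injective, hcard], by rw [intDiff_image_neg, hD]⟩

lemma IsSkewPDS.compl (h : IsSkewPDS D A v k lam mu) {n : ℕ} (hn : 2 * k + n = v) :
    IsSkewPDS Dᶜ Aᶜ v (k + n) (mu + n) (lam + n) := by
  obtain ⟨⟨hv, hA, hΔA⟩, hD, hΔD⟩ := h
  have card_compl' {E : Finset G} (hE : #E = k) : #Eᶜ = k + n := by
    rw [card_compl]
    lia
  have intDiff_compl {E : Finset G} (hE : #E = k)
      (hΔE : intDiff E = lam • (A.erase 0).val + mu • (Gstar G \ A).val) :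
      intDiff Eᶜ = (mu + n) • (Aᶜ.erase 0).val + (lam + n) • (Gstar G \ Aᶜ).val := by
    rw [intDiff_eq_iff] at hΔE ⊢
    intro d hd
    have hcount := count_intDiff_compl E hd
    rw [hΔE d hd] at hcount
    by_cases hdA : d ∈ A <;> simp only [mem_compl, hdA, not_true, not_false_eq_true, if_true,
      if_false] at hcount ⊢ <;> lia
  exact ⟨⟨hv, card_compl' hA, intDiff_compl hA hΔA⟩, card_compl' hD, intDiff_compl hD hΔD⟩

lemma two_mul_card_eq_sum_signFun (h0 : 0 ∉ D) :
    2 * (#D : ℤ) = ∑ x, signFun D x + Fintype.card G - 1 := by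
  have := sum_congr rfl fun x (_ : x ∈ univ) ↦ two_mul_indicator_eq h0 x
  rw [← mul_sum] at this
  simpa [sum_add_distrib] using this

lemma four_mul_count_intDiff (h0 : 0 ∉ D) {d : G} (hd : d ≠ 0) :
    4 * ((intDiff D).count d : ℤ) = ∑ x, signFun D x * signFun D (x - d) +
      2 * ∑ x, signFun D x - (signFun D d + signFun D (-d)) + Fintype.card G - 2 := by
  have expand (x : G) : (4 * if x ∈ D ∧ x - d ∈ D then 1 else 0 : ℤ) =
      signFun D x * signFun D (x - d) + signFun D x + signFun D (x - d) + 1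
        - (if x = 0 then signFun D (x - d) + 1 else 0)
        - (if x = d then signFun D x + 1 else 0) := by
    have hx := two_mul_indicator_eq h0 x
    have hxd := two_mul_indicator_eq h0 (x - d)
    calc
      _ = (2 * if x ∈ D then 1 else 0 : ℤ) * (2 * if x - d ∈ D then 1 else 0) := by
        by_cases h : x ∈ D <;> by_cases h' : x - d ∈ D <;> simp [h, h']
      _ = _ := by
        rw [hx, hxd]
        simp only [sub_eq_zero]
        by_cases h : x = 0
        · simp [h, hd.symm, signFun]
        · by_cases h' : x = d <;> simp only [h, h', hd, if_true, if_false] <;> ring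
  have sum_shift : ∑ x, signFun D (x - d) = ∑ x, signFun D x :=
    (Equiv.subRight d).sum_comp (signFun D)
  have count_eq : ((intDiff D).count d : ℤ) = ∑ x, if x ∈ D ∧ x - d ∈ D then 1 else 0 := by
    rw [count_intDiff D hd, ← filter_univ_mem D, filter_filter, card_filter]
    push_cast
    simp
  rw [count_eq, mul_sum, sum_congr rfl fun x _ ↦ expand x]
  simp only [sum_sub_distrib, sum_add_distrib, sum_shift, sum_ite_eq', mem_univ, if_true,
    sum_const, card_univ, nsmul_eq_mul, mul_one, zero_sub]
  ring

lemma isSkewPDS_of_signFun (hD0 : 0 ∉ D) (hA0 : 0 ∉ A) (hD : ∑ x, signFun D x = 0)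
    (hA : ∑ x, signFun A x = 0)
    (hDD : ∀ d ≠ 0, ∑ x, signFun D x * signFun D (x - d) - (signFun D d + signFun D (-d)) =
      -1 - 2 * signFun A d)
    (hAA : ∀ d ≠ 0, ∑ x, signFun A x * signFun A (x - d) - (signFun A d + signFun A (-d)) =
      -1 - 2 * signFun A d) :
    IsSkewPDS D A (Fintype.card G) ((Fintype.card G - 1) / 2) ((Fintype.card G - 5) / 4)
      ((Fintype.card G - 1) / 4) := by
  have card_eq {E : Finset G} (h0 : 0 ∉ E) (hE : ∑ x, signFun E x = 0) :
      #E = (Fintype.card G - 1) / 2 := by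
    have := two_mul_card_eq_sum_signFun h0
    lia
  have intDiff_eq {E : Finset G} (h0 : 0 ∉ E) (hE : ∑ x, signFun E x = 0)
      (hEE : ∀ d ≠ 0, ∑ x, signFun E x * signFun E (x - d) - (signFun E d + signFun E (-d)) =
        -1 - 2 * signFun A d) :
      intDiff E = ((Fintype.card G - 5) / 4) • (A.erase 0).val +
        ((Fintype.card G - 1) / 4) • (Gstar G \ A).val := by
    rw [intDiff_eq_iff]
    intro d hd
    have hcount := four_mul_count_intDiff h0 hd
    have hsign := hEE d hd
    have sign_d : signFun A d = if d ∈ A then 1 else -1 := by simp [signFun, hd]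
    split_ifs at sign_d ⊢ <;> lia
  exact ⟨⟨rfl, card_eq hA0 hA, intDiff_eq hA0 hA hAA⟩, card_eq hD0 hD, intDiff_eq hD0 hD hDD⟩

end Differences

section Cyclotomy

variable {F : Type*} [Field F] {α : F} {e n i j : ℕ}

namespace IsPrimitiveElt

lemma mem_zpowers (hα : IsPrimitiveElt α) (h0 : α ≠ 0) (x : Fˣ) :
    x ∈ Subgroup.zpowers (Units.mk0 α h0) := by
  obtain ⟨n, hn⟩ := hα x x.ne_zero
  exact ⟨n, Units.ext (by simpa using hn)⟩

variable [Fintype F]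

lemma ne_zero (hα : IsPrimitiveElt α) (hF : 2 < Fintype.card F) : α ≠ 0 := by
  rintro rfl
  have eq_zero_or_one (x : F) : x = 0 ∨ x = 1 := by
    refine or_iff_not_imp_left.2 fun hx ↦ ?_
    obtain ⟨n, rfl⟩ := hα x hx
    rw [pow_eq_zero_iff', not_and_not_right] at hx
    rw [hx rfl, pow_zero]
  obtain ⟨a, b, c, hab, hac, hbc⟩ := Fintype.two_lt_card_iff.1 hF
  grind [eq_zero_or_one a, eq_zero_or_one b, eq_zero_or_one c]

lemma orderOf_eq (hα : IsPrimitiveElt α) (hF : 2 < Fintype.card F) :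
    orderOf α = Fintype.card F - 1 := by
  classical
  rw [← Fintype.card_units, ← Nat.card_eq_fintype_card,
    ← orderOf_eq_card_of_forall_mem_zpowers (hα.mem_zpowers (hα.ne_zero hF)), ← orderOf_units,
    Units.val_mk0]

lemma pow_eq_pow_iff (hα : IsPrimitiveElt α) (hF : 2 < Fintype.card F) :
    α ^ n = α ^ i ↔ n ≡ i [MOD Fintype.card F - 1] := by
  have : IsOfFinOrder α := by
    rw [← orderOf_pos_iff, hα.orderOf_eq hF]
    lia
  rw [this.pow_eq_pow_iff_modEq, hα.orderOf_eq hF]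

lemma pow_half (hα : IsPrimitiveElt α) (hF : 2 < Fintype.card F)
    (hn : 2 * n + 1 = Fintype.card F) : α ^ n = -1 := by
  have sq_eq_one : (α ^ n) ^ 2 = α ^ 0 := by
    rw [← pow_mul, hα.pow_eq_pow_iff hF, Nat.modEq_zero_iff_dvd]
    exact ⟨1, by lia⟩
  have ne_one : α ^ n ≠ α ^ 0 := by
    rw [Ne, hα.pow_eq_pow_iff hF, Nat.modEq_zero_iff_dvd]
    exact fun h ↦ by have := Nat.le_of_dvd (by lia) h; lia
  rw [pow_zero] at sq_eq_one ne_one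
  exact (sq_eq_one_iff.1 sq_eq_one).resolve_left ne_one

variable [DecidableEq F]

lemma quadraticChar_pow (hα : IsPrimitiveElt α) (hF : ringChar F ≠ 2) (n : ℕ) :
    quadraticChar F (α ^ n) = (-1) ^ n := by
  have two_lt_card : 2 < Fintype.card F := by
    have := FiniteField.odd_card_of_char_ne_two hF
    have := Fintype.one_lt_card (α := F)
    lia
  obtain ⟨x, hx⟩ := quadraticChar_exists_neg_one hF
  obtain ⟨l, rfl⟩ := hα x (by rintro rfl; simp at hx)
  have : quadraticChar F α = -1 := by
    refine (quadraticChar_dichotomy (hα.ne_zero two_lt_card)).resolve_left fun h ↦ ?_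
    simp [map_pow, h] at hx
  rw [map_pow, this]

lemma pow_mem_cycClass_iff (hα : IsPrimitiveElt α) (hF : 2 < Fintype.card F)
    (he : e ∣ Fintype.card F - 1) : α ^ n ∈ cycClass α e i ↔ n ≡ i [MOD e] := by
  simp only [cycClass, mem_image, mem_range, hα.pow_eq_pow_iff hF]
  constructor
  · rintro ⟨j, -, hj⟩
    calc n ≡ e * j + i [MOD e] := (hj.of_dvd he).symm
      _ ≡ i [MOD e] := by simp [Nat.ModEq]
  · intro hn
    have i_le : i ≤ n + (Fintype.card F - 1) * i :=
      le_add_left (Nat.le_mul_of_pos_left i (by lia))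
    obtain ⟨l, hl⟩ : e ∣ n + (Fintype.card F - 1) * i - i := by
      refine (Nat.modEq_iff_dvd' i_le).1 ?_
      simpa using (hn.add ((Nat.modEq_zero_iff_dvd.2 (he.mul_right i)))).symm
    refine ⟨l % (Fintype.card F - 1), (Nat.mod_lt _ (by lia)).trans (by lia), ?_⟩
    calc e * (l % (Fintype.card F - 1)) + i
        ≡ e * l + i [MOD Fintype.card F - 1] := ((Nat.mod_modEq _ _).mul_left e).add_right i
      _ = n + (Fintype.card F - 1) * i := by lia
      _ ≡ n [MOD Fintype.card F - 1] := by simp [Nat.ModEq]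

lemma zero_notMem_cycClass (hα : IsPrimitiveElt α) (hF : 2 < Fintype.card F) (e i : ℕ) :
    0 ∉ cycClass α e i := by
  simp [cycClass, hα.ne_zero hF]

lemma cycClass_congr (hα : IsPrimitiveElt α) (hF : 2 < Fintype.card F)
    (he : e ∣ Fintype.card F - 1) (hij : i ≡ j [MOD e]) : cycClass α e i = cycClass α e j := by
  ext x
  by_cases hx : x = 0
  · simp [hx, hα.zero_notMem_cycClass hF]
  · obtain ⟨n, rfl⟩ := hα x hx
    rw [hα.pow_mem_cycClass_iff hF he, hα.pow_mem_cycClass_iff hF he]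
    exact ⟨fun h ↦ h.trans hij, fun h ↦ h.trans hij.symm⟩

lemma image_neg_cycClass (hα : IsPrimitiveElt α) (hF : 2 < Fintype.card F)
    (hn : 2 * n + 1 = Fintype.card F) :
    (cycClass α e i).image (fun x ↦ -x) = cycClass α e (i + n) := by
  simp only [cycClass, image_image]
  refine image_congr fun j _ ↦ ?_
  rw [← add_assoc, pow_add, hα.pow_half hF hn, mul_neg_one, Function.comp_apply]

lemma image_neg_cycClass_zero_union_three (hα : IsPrimitiveElt α) (hF : Fintype.card F % 8 = 5) :
    (cycClass α 4 0 ∪ cycClass α 4 3).image (fun x ↦ -x) = cycClass α 4 1 ∪ cycClass α 4 2 := by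
  have he : 4 ∣ Fintype.card F - 1 := by lia
  have hn : 2 * ((Fintype.card F - 1) / 2) + 1 = Fintype.card F := by lia
  have zero_add_half : 0 + (Fintype.card F - 1) / 2 ≡ 2 [MOD 4] := by rw [Nat.ModEq]; lia
  have three_add_half : 3 + (Fintype.card F - 1) / 2 ≡ 1 [MOD 4] := by rw [Nat.ModEq]; lia
  rw [image_union, hα.image_neg_cycClass (by lia) hn, hα.image_neg_cycClass (by lia) hn,
    hα.cycClass_congr (by lia) he zero_add_half, hα.cycClass_congr (by lia) he three_add_half,
    union_comm]

lemma compl_cycClass_zero_union_three (hα : IsPrimitiveElt α) (hF : Fintype.card F % 4 = 1) :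
    (cycClass α 4 0 ∪ cycClass α 4 3)ᶜ = cycClass α 4 1 ∪ cycClass α 4 2 ∪ {0} := by
  have two_lt_card : 2 < Fintype.card F := by have := Fintype.one_lt_card (α := F); lia
  ext x
  by_cases hx : x = 0
  · simp [hx, hα.zero_notMem_cycClass two_lt_card]
  · obtain ⟨n, rfl⟩ := hα x hx
    simp only [mem_compl, mem_union, hα.pow_mem_cycClass_iff two_lt_card (e := 4) (by lia),
      Nat.ModEq, mem_singleton, hx]
    lia

lemma Gstar_sdiff_cycClass_zero_union_three (hα : IsPrimitiveElt α)
    (hF : Fintype.card F % 4 = 1) :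
    Gstar F \ (cycClass α 4 0 ∪ cycClass α 4 3) = cycClass α 4 1 ∪ cycClass α 4 2 := by
  have zero_notMem := hα.zero_notMem_cycClass (by have := Fintype.one_lt_card (α := F); lia)
  rw [Gstar, erase_sdiff_comm, ← compl_eq_univ_sdiff, hα.compl_cycClass_zero_union_three hF,
    union_comm, ← insert_eq, erase_insert]
  exact notMem_union.2 ⟨zero_notMem 4 1, zero_notMem 4 2⟩

lemma compl_cycClass_two (hα : IsPrimitiveElt α) (hF : Fintype.card F % 2 = 1)
    (hij : i % 2 ≠ j % 2) : (cycClass α 2 i)ᶜ = cycClass α 2 j ∪ {0} := by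
  have two_lt_card : 2 < Fintype.card F := by have := Fintype.one_lt_card (α := F); lia
  ext x
  by_cases hx : x = 0
  · simp [hx, hα.zero_notMem_cycClass two_lt_card]
  · obtain ⟨n, rfl⟩ := hα x hx
    simp only [mem_compl, mem_union, hα.pow_mem_cycClass_iff two_lt_card (e := 2) (by lia),
      Nat.ModEq, mem_singleton, hx]
    lia

lemma signFun_cycClass_two (hα : IsPrimitiveElt α) (hF : ringChar F ≠ 2) (i : ℕ) (x : F) :
    signFun (cycClass α 2 i) x = (-1) ^ i * quadraticChar F x := by
  have card_mod := FiniteField.odd_card_of_char_ne_two hF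
  have two_lt_card : 2 < Fintype.card F := by have := Fintype.one_lt_card (α := F); lia
  by_cases hx : x = 0
  · simp [signFun, hx]
  · obtain ⟨n, rfl⟩ := hα x hx
    simp only [signFun, hx, if_false, hα.quadraticChar_pow hF,
      hα.pow_mem_cycClass_iff two_lt_card (e := 2) (by lia), Nat.ModEq, ← pow_add]
    split_ifs with h
    · exact (Nat.even_iff.2 (by lia)).neg_one_pow.symm
    · exact (Nat.odd_iff.2 (by lia)).neg_one_pow.symm

end IsPrimitiveElt

end Cyclotomy

section Characters

variable {F R : Type*} [Field F] [Fintype F] [CommRing R]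

lemma IsPrimitiveElt.exists_mulChar {α : F} (hα : IsPrimitiveElt α) (hF : 2 < Fintype.card F)
    {ζ : R} (hζ : ζ ^ (Fintype.card F - 1) = 1) : ∃ χ : MulChar F R, χ α = ζ := by
  classical
  have mem_zpowers := hα.mem_zpowers (hα.ne_zero hF)
  set ξ : Rˣ := Units.ofPowEqOne ζ (Fintype.card F - 1) hζ (by lia)
  have hξ : ξ ∈ rootsOfUnity (Fintype.card Fˣ) R := by
    rw [mem_rootsOfUnity, Fintype.card_units]
    exact Units.pow_ofPowEqOne hζ _
  exact ⟨MulChar.ofRootOfUnity hξ mem_zpowers, MulChar.ofRootOfUnity_spec hξ mem_zpowers⟩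

lemma sum_mulChar_mul_shift (χ ψ : MulChar F R) {d : F} (hd : d ≠ 0) :
    ∑ x, χ x * ψ (x - d) = χ d * ψ (-d) * jacobiSum χ ψ := by
  rw [jacobiSum, mul_sum, ← Equiv.sum_comp (Equiv.mulLeft₀ d hd)]
  refine sum_congr rfl fun x _ ↦ ?_
  rw [Equiv.mulLeft₀_apply, show d * x - d = -d * (1 - x) by ring, map_mul, map_mul]
  ring

lemma sum_mulChar_mul_inv_shift [IsDomain R] {χ : MulChar F R} (hχ : χ ≠ 1) {d : F} (hd : d ≠ 0) :
    ∑ x, χ x * χ⁻¹ (x - d) = -1 := by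
  calc ∑ x, χ x * χ⁻¹ (x - d)
    _ = χ d * χ⁻¹ (-d) * -χ (-1) := by
      rw [sum_mulChar_mul_shift χ χ⁻¹ hd, jacobiSum_nontrivial_inv hχ]
    _ = -((χ * χ⁻¹) (-d)) := by
      rw [MulChar.mul_apply, neg_eq_neg_one_mul d, map_mul χ]
      ring
    _ = -1 := by
      rw [mul_inv_cancel, MulChar.one_apply (neg_ne_zero.2 hd).isUnit]

lemma sum_quadraticChar_mul_shift [DecidableEq F] (hF : ringChar F ≠ 2) {d : F} (hd : d ≠ 0) :
    ∑ x, quadraticChar F x * quadraticChar F (x - d) = -1 := by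
  have := sum_mulChar_mul_inv_shift (quadraticChar_ne_one hF) hd
  rwa [(quadraticChar_isQuadratic F).inv] at this

end Characters

section GaussianCharacters

lemma inv_mulChar_apply_eq_star {M : Type*} [CommMonoid M] (χ : MulChar M GaussianInt) (x : M) :
    χ⁻¹ x = star (χ x) := by
  by_cases hx : IsUnit x
  · have inv_mul_self : χ⁻¹ x * χ x = 1 := by
      rw [← MulChar.mul_apply, inv_mul_cancel, MulChar.one_apply hx]
    have star_mul_self : star (χ x) * χ x = 1 := by
      have : (χ x).norm = 1 := (Zsqrtd.norm_eq_one_iff' (by norm_num) _).2 (hx.map χ)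
      rw [mul_comm, ← Zsqrtd.norm_eq_mul_conj, this, Int.cast_one]
    exact mul_right_cancel₀ (hx.map χ).ne_zero (inv_mul_self.trans star_mul_self.symm)
  · rw [MulChar.map_nonunit _ hx, MulChar.map_nonunit _ hx, star_zero]

lemma zsqrtd_re_sum {ι : Type*} {d : ℤ} (s : Finset ι) (f : ι → ℤ√d) :
    (∑ i ∈ s, f i).re = ∑ i ∈ s, (f i).re :=
  map_sum (AddMonoidHom.mk' Zsqrtd.re Zsqrtd.re_add) f s

lemma zsqrtd_im_sum {ι : Type*} {d : ℤ} (s : Finset ι) (f : ι → ℤ√d) :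
    (∑ i ∈ s, f i).im = ∑ i ∈ s, (f i).im :=
  map_sum (AddMonoidHom.mk' Zsqrtd.im Zsqrtd.im_add) f s

variable {F : Type*} [Field F] [Fintype F]

lemma norm_jacobiSum {χ ψ : MulChar F GaussianInt} (hχ : χ ≠ 1) (hψ : ψ ≠ 1) (hχψ : χ * ψ ≠ 1) :
    (jacobiSum χ ψ).norm = Fintype.card F := by
  have toComplex_inj := GaussianInt.toComplex_injective
  have mul_inv_eq : jacobiSum χ ψ * jacobiSum χ⁻¹ ψ⁻¹ = Fintype.card F := by
    refine toComplex_inj ?_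
    rw [map_mul, map_natCast, ← jacobiSum_ringHomComp, ← jacobiSum_ringHomComp,
      ← MulChar.ringHomComp_inv, ← MulChar.ringHomComp_inv]
    refine jacobiSum_mul_jacobiSum_inv ?_ ?_ ?_ ?_
    · rw [ringChar.eq_zero]
      exact (CharP.ringChar_ne_zero_of_finite F).symm
    · exact (MulChar.ringHomComp_ne_one_iff toComplex_inj).2 hχ
    · exact (MulChar.ringHomComp_ne_one_iff toComplex_inj).2 hψ
    · rw [← MulChar.ringHomComp_mul]
      exact (MulChar.ringHomComp_ne_one_iff toComplex_inj).2 hχψ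
  have inv_eq_star : jacobiSum χ⁻¹ ψ⁻¹ = star (jacobiSum χ ψ) := by
    simp only [jacobiSum, star_sum, star_mul', inv_mulChar_apply_eq_star]
  have : ((jacobiSum χ ψ).norm : GaussianInt) = (Fintype.card F : ℤ) := by
    rw [Zsqrtd.norm_eq_mul_conj, ← inv_eq_star, mul_inv_eq, Int.cast_natCast]
  exact_mod_cast this

/-- The real coordinate `Im z - Re z` of a Gaussian integer. On the powers `1, i, -1, -i` of the
imaginary unit it takes the values `-1, 1, 1, -1`, so that composing it with a quartic character
gives the signs of `C_1^4 ∪ C_2^4`. -/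
def imSubRe : GaussianInt →+ ℤ where
  toFun z := z.im - z.re
  map_zero' := rfl
  map_add' z w := by simp only [Zsqrtd.im_add, Zsqrtd.re_add]; ring

lemma imSubRe_apply (z : GaussianInt) : imSubRe z = z.im - z.re := rfl

lemma imSubRe_mul_imSubRe (z w : GaussianInt) :
    imSubRe z * imSubRe w = (z * star w).re - (z * w).im := by
  simp only [imSubRe_apply, Zsqrtd.re_mul, Zsqrtd.im_mul, Zsqrtd.re_star, Zsqrtd.im_star]
  ring

lemma sum_imSubRe_mul_shift {χ : MulChar F GaussianInt} (hχ : χ ≠ 1) {d : F} (hd : d ≠ 0) :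
    ∑ x, imSubRe (χ x) * imSubRe (χ (x - d)) = -1 - (χ d * χ (-d) * jacobiSum χ χ).im := by
  simp only [imSubRe_mul_imSubRe, ← inv_mulChar_apply_eq_star, sum_sub_distrib]
  rw [← zsqrtd_re_sum, ← zsqrtd_im_sum, sum_mulChar_mul_inv_shift hχ hd,
    sum_mulChar_mul_shift χ χ hd]
  rfl

end GaussianCharacters

section JacobiSumCongruence

variable {F : Type*} [Field F] [Fintype F]

lemma sum_eq_apply_inv_two {M : Type*} [AddCommMonoid M] (hF : ringChar F ≠ 2) {f : F → M}
    (f_one_sub : ∀ x, f (1 - x) = f x) (two_f : ∀ x, f x + f x = 0) : ∑ x, f x = f 2⁻¹ := by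
  classical
  have two_ne_zero : (2 : F) ≠ 0 := Ring.two_ne_zero hF
  have eq_inv_two_iff (x : F) : 1 - x = x ↔ x = 2⁻¹ := by
    rw [sub_eq_iff_eq_add, ← two_mul, eq_comm, mul_comm, mul_eq_one_iff_eq_inv₀ two_ne_zero]
  have sum_erase : ∑ x ∈ univ.erase 2⁻¹, f x = 0 := by
    refine sum_involution (fun x _ ↦ 1 - x) (fun x _ ↦ ?_) (fun x hx _ ↦ ?_) (fun x hx ↦ ?_)
      fun x _ ↦ sub_sub_cancel 1 x
    · rw [f_one_sub, two_f]
    · rw [Ne, eq_inv_two_iff]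
      exact (mem_erase.1 hx).1
    · refine mem_erase.2 ⟨fun h ↦ (mem_erase.1 hx).1 ?_, mem_univ _⟩
      rw [← sub_sub_cancel 1 x, h, (eq_inv_two_iff _).2 rfl]
  rw [← add_sum_erase univ f (mem_univ 2⁻¹), sum_erase, add_zero]

lemma two_mul_dvd_jacobiSum_self_sub {R : Type*} [CommRing R] (hF : ringChar F ≠ 2)
    {χ : MulChar F R} {π : R} (hχ : ∀ x ≠ 0, π ∣ χ x - 1) :
    2 * π ∣ jacobiSum χ χ - (Fintype.card F - 3 + χ 4⁻¹) := by
  set f : F → R := fun x ↦ χ x * χ (1 - x) - (1 : MulChar F R) x * (1 : MulChar F R) (1 - x)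
    with hf
  have two_ne_zero : (2 : F) ≠ 0 := Ring.two_ne_zero hF
  have inv_four : (2⁻¹ : F) * 2⁻¹ = 4⁻¹ := by rw [← mul_inv]; norm_num
  have one_sub_inv_two : (1 - 2⁻¹ : F) = 2⁻¹ := by field_simp; norm_num
  have dvd_f (x : F) : π ∣ f x := by
    by_cases hx : x = 0
    · simp [hf, hx, MulChar.map_zero]
    by_cases hx1 : 1 - x = 0
    · simp [hf, hx1, MulChar.map_zero]
    have : f x = χ x * (χ (1 - x) - 1) + (χ x - 1) := by
      simp only [hf, MulChar.one_apply (Ne.isUnit hx), MulChar.one_apply (Ne.isUnit hx1)]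
      ring
    rw [this]
    exact dvd_add ((hχ _ hx1).mul_left _) (hχ x hx)
  have f_inv_two : f 2⁻¹ = χ 4⁻¹ - 1 := by
    simp only [hf, one_sub_inv_two]
    rw [← map_mul, inv_four, MulChar.one_apply (inv_ne_zero two_ne_zero).isUnit, one_mul]
  have sum_f : ∑ x, f x = jacobiSum χ χ - (Fintype.card F - 2) := by
    rw [← jacobiSum_one_one, jacobiSum, jacobiSum, ← sum_sub_distrib]
  have sum_f_mod : Ideal.Quotient.mk (Ideal.span {2 * π}) (∑ x, f x) =
      Ideal.Quotient.mk (Ideal.span {2 * π}) (f 2⁻¹) := by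
    rw [map_sum]
    refine sum_eq_apply_inv_two hF (fun x ↦ ?_) fun x ↦ ?_
    · simp only [hf, sub_sub_cancel, mul_comm]
    · rw [← map_add, ← two_mul, Ideal.Quotient.eq_zero_iff_dvd]
      exact mul_dvd_mul_left 2 (dvd_f x)
  rw [Ideal.Quotient.mk_eq_mk_iff_sub_mem, Ideal.mem_span_singleton, sum_f, f_inv_two] at sum_f_mod
  convert sum_f_mod using 1
  ring

end JacobiSumCongruence

section Arithmetic

lemma not_dvd_choose_mul_geom_sum {p a b : ℕ} (hp : p.Prime) (hab : a ≤ b) (hb : b < p) (m : ℕ) :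
    ¬ p ∣ (b * ∑ i ∈ range m, p ^ i).choose (a * ∑ i ∈ range m, p ^ i) := by
  have := Fact.mk hp
  have not_dvd_choose : ¬ p ∣ b.choose a := fun h ↦ hb.not_ge <| hp.dvd_factorial.1 <| by
    rw [← Nat.choose_mul_factorial_mul_factorial hab, mul_assoc]
    exact h.mul_right _
  induction m with
  | zero => simpa using hp.one_lt.ne'
  | succ m ih =>
    have mul_succ (c : ℕ) :
        c * ∑ i ∈ range (m + 1), p ^ i = c + p * (c * ∑ i ∈ range m, p ^ i) := by
      rw [geom_sum_succ]
      ring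
    have lucas := Choose.choose_modEq_choose_mod_mul_choose_div_nat (p := p)
      (n := b * ∑ i ∈ range (m + 1), p ^ i) (k := a * ∑ i ∈ range (m + 1), p ^ i)
    rw [mul_succ, mul_succ, Nat.add_mul_mod_self_left, Nat.add_mul_mod_self_left,
      Nat.mod_eq_of_lt hb, Nat.mod_eq_of_lt (hab.trans_lt hb), Nat.add_mul_div_left _ _ hp.pos,
      Nat.add_mul_div_left _ _ hp.pos, Nat.div_eq_of_lt hb, Nat.div_eq_of_lt (hab.trans_lt hb),
      zero_add, zero_add] at lucas
    rw [mul_succ, mul_succ, lucas.dvd_iff dvd_rfl, hp.dvd_mul]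
    exact not_or.2 ⟨not_dvd_choose, ih⟩

lemma mod_eight_eq_five_of_pow {n m : ℕ} (h : n ^ m % 8 = 5) : n % 8 = 5 := by
  have n_odd : Odd n := Nat.Odd.of_mul_left (n := n ^ (m - 1)) <| by
    rw [← pow_succ', Nat.sub_add_cancel (Nat.pos_of_ne_zero _), Nat.odd_iff]
    · lia
    · rintro rfl
      simp at h
  have sq_mod : n ^ 2 ≡ 1 [MOD 8] :=
    ((Nat.modEq_iff_dvd' (Nat.pow_pos n_odd.pos)).2 (Nat.eight_dvd_sq_sub_one_of_odd n_odd)).symm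
  have pow_mod : n ^ m ≡ n ^ (m % 2) [MOD 8] := by
    simpa only [← pow_mul, ← pow_add, Nat.div_add_mod, one_pow, one_mul] using
      (sq_mod.pow (m / 2)).mul_right (n ^ (m % 2))
  rcases Nat.mod_two_eq_zero_or_one m with hm | hm <;> simp only [hm, pow_zero, pow_one] at pow_mod
  · exact absurd (Eq.trans pow_mod.symm h) (by decide)
  · exact Eq.trans pow_mod.symm h

lemma not_dvd_choose_of_pow_mod_eight {p m k : ℕ} (hp : p.Prime) (hk : p ^ m = 4 * k + 1)
    (hq : p ^ m % 8 = 5) : ¬ p ∣ (3 * k).choose k := by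
  have p_mod := mod_eight_eq_five_of_pow hq
  obtain ⟨d, rfl⟩ : ∃ d, p = 4 * d + 1 := ⟨p / 4, by lia⟩
  have k_eq : k = d * ∑ i ∈ range m, (4 * d + 1) ^ i := by
    have := geom_sum_mul_add (4 * d) m
    have : 4 * k = 4 * (d * ∑ i ∈ range m, (4 * d + 1) ^ i) := by lia
    lia
  have := not_dvd_choose_mul_geom_sum hp (a := d) (b := 3 * d) (by lia) (by lia) m
  rwa [mul_assoc, ← k_eq] at this

lemma emod_four_eq_two_of_sq_add_sq {a b : ℤ} (h : (a ^ 2 + b ^ 2) % 8 = 5) (hb : b % 2 = 0) :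
    b % 4 = 2 := by
  have hb_sq : b ^ 2 % 8 = 4 := by
    obtain ⟨c, rfl⟩ : 2 ∣ b := Int.dvd_of_emod_eq_zero hb
    have ha : Odd a := by
      rw [← Int.odd_pow' two_ne_zero, Int.odd_iff]
      lia
    have := Int.eight_dvd_sq_sub_one_of_odd ha
    lia
  by_contra hb4
  obtain ⟨c, rfl⟩ : 4 ∣ b := by lia
  lia

lemma eq_zero_of_dvd_of_sq_le_sq {q x : ℤ} (hq : q % 2 = 1) (hx : x % 2 = 0) (hdvd : q ∣ x)
    (hle : x ^ 2 ≤ q ^ 2) : x = 0 := by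
  obtain ⟨c, rfl⟩ := hdvd
  have q_sq_pos : 0 < q ^ 2 := sq_pos_of_ne_zero (fun h ↦ by simp [h] at hq)
  have abs_c_le : |c| ≤ 1 := by
    rw [← sq_le_one_iff_abs_le_one]
    refine le_of_mul_le_mul_left ?_ q_sq_pos
    rwa [← mul_pow, mul_one]
  have c_even : c % 2 = 0 := by
    rw [Int.mul_emod, hq] at hx
    lia
  rw [show c = 0 by grind, mul_zero]

lemma sq_eq_sq_of_mul_add_mul_eq_zero {a b s t : ℤ} (hst : a ^ 2 + b ^ 2 = s ^ 2 + t ^ 2)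
    (hpos : a ^ 2 + b ^ 2 ≠ 0) (h : a * t + b * s = 0) : b ^ 2 = t ^ 2 := by
  refine mul_left_cancel₀ hpos ?_
  linear_combination b ^ 2 * hst + (b * s - a * t) * h

lemma mul_add_mul_eq_zero_of_not_dvd {p m : ℕ} {s t a b : ℤ} (hp : p.Prime)
    (hst : (p : ℤ) ^ m = s ^ 2 + t ^ 2) (hab : (p : ℤ) ^ m = a ^ 2 + b ^ 2)
    (hndvd : ¬ (p : ℤ) ∣ a * t - b * s) (hp_odd : (p : ℤ) ^ m % 2 = 1)
    (ht : t % 2 = 0) (hb : b % 2 = 0) : a * t + b * s = 0 := by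
  have dvd_mul : (p : ℤ) ^ m ∣ (a * t - b * s) * (a * t + b * s) :=
    ⟨t ^ 2 - b ^ 2, by linear_combination b ^ 2 * hst - t ^ 2 * hab⟩
  have isCoprime : IsCoprime ((p : ℤ) ^ m) (a * t - b * s) :=
    ((Prime.coprime_iff_not_dvd (Nat.prime_iff_prime_int.1 hp)).2 hndvd).pow_left
  have sq_le_sq : (a * t + b * s) ^ 2 ≤ ((p : ℤ) ^ m) ^ 2 := by
    have : ((p : ℤ) ^ m) ^ 2 = (a * t + b * s) ^ 2 + (a * s - b * t) ^ 2 := by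
      linear_combination (p : ℤ) ^ m * hst + (s ^ 2 + t ^ 2) * hab
    rw [this]
    exact le_add_of_nonneg_right (sq_nonneg _)
  have even : (a * t + b * s) % 2 = 0 := by simp [Int.add_emod, Int.mul_emod, ht, hb]
  exact eq_zero_of_dvd_of_sq_le_sq hp_odd even (isCoprime.dvd_of_dvd_mul_left dvd_mul) sq_le_sq

lemma eq_of_sq_add_sq_eq_pow {p m : ℕ} {s t a b : ℤ} (hp : p.Prime)
    (hst : (p : ℤ) ^ m = s ^ 2 + t ^ 2) (hab : (p : ℤ) ^ m = a ^ 2 + b ^ 2)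
    (hndvd : ¬ (p : ℤ) ∣ a * t - b * s) (hs : s % 4 = 1) (ha : a % 4 = 3) (hb : b % 4 = 2) :
    b = t := by
  have sq_emod_two (x : ℤ) : x ^ 2 % 2 = x % 2 := by
    rcases Int.emod_two_eq_zero_or_one x with h | h <;> simp [pow_two, Int.mul_emod, h]
  have hp_odd : (p : ℤ) ^ m % 2 = 1 := by
    rw [hab, Int.add_emod, sq_emod_two, sq_emod_two]
    lia
  have t_even : t % 2 = 0 := by
    rw [hst, Int.add_emod, sq_emod_two, sq_emod_two] at hp_odd
    lia
  have add_eq_zero : a * t + b * s = 0 :=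
    mul_add_mul_eq_zero_of_not_dvd hp hst hab hndvd hp_odd t_even (by lia)
  have sq_eq_sq : b ^ 2 = t ^ 2 := by
    refine sq_eq_sq_of_mul_add_mul_eq_zero (hab.symm.trans hst) (fun h ↦ ?_) add_eq_zero
    simp [hab, h] at hp_odd
  rcases sq_eq_sq_iff_eq_or_eq_neg.1 sq_eq_sq with h | rfl
  · exact h
  · have t_mul_eq_zero : t * (a - s) = 0 := by linear_combination add_eq_zero
    rcases mul_eq_zero.1 t_mul_eq_zero with h | h
    · simp [h] at hb
    · lia

end Arithmetic

section PowerSums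

variable {F : Type*} [Field F] [Fintype F]

lemma sum_pow_eq_ite {i : ℕ} (hi : i ≠ 0) :
    ∑ x : F, x ^ i = if Fintype.card F - 1 ∣ i then -1 else 0 := by
  classical
  rw [← FiniteField.sum_pow_units F i, ← add_sum_erase univ _ (mem_univ (0 : F)), zero_pow hi,
    zero_add]
  symm
  refine sum_bij (fun u _ ↦ (u : F)) (fun u _ ↦ mem_erase.2 ⟨u.ne_zero, mem_univ _⟩)
    (fun u _ v _ h ↦ Units.ext h) (fun x hx ↦ ?_) fun u _ ↦ rfl
  exact ⟨Units.mk0 x (ne_of_mem_erase hx), mem_univ _, rfl⟩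

lemma sum_pow_mul_one_sub_pow {R : Type*} [CommRing R] [Fintype R] (a b : ℕ) :
    ∑ x : R, x ^ a * (1 - x) ^ b =
      ∑ j ∈ range (b + 1), (-1) ^ j * (b.choose j : R) * ∑ x : R, x ^ (a + j) := by
  simp_rw [mul_sum]
  rw [sum_comm]
  refine sum_congr rfl fun x _ ↦ ?_
  rw [sub_eq_neg_add, add_pow, mul_sum]
  refine sum_congr rfl fun j _ ↦ ?_
  rw [neg_pow, pow_add]
  ring

lemma sum_pow_mul_one_sub_pow_eq {a b n : ℕ} (hF : Fintype.card F = a + n + 1) (ha : a ≠ 0)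
    (hb : b < a + n) :
    ∑ x : F, x ^ a * (1 - x) ^ b = -((-1) ^ n * (b.choose n : F)) := by
  have dvd_iff (j : ℕ) (hj : j ≤ b) : Fintype.card F - 1 ∣ a + j ↔ j = n := by
    rw [hF, Nat.add_sub_cancel]
    refine ⟨fun h ↦ ?_, fun h ↦ h ▸ dvd_rfl⟩
    have := Nat.eq_of_dvd_of_lt_two_mul (by lia) h (by lia)
    lia
  rw [sum_pow_mul_one_sub_pow, sum_eq_single n]
  · rw [sum_pow_eq_ite (by lia), if_pos (by simp [hF]), mul_neg_one]
  · intro j hj hjn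
    rw [sum_pow_eq_ite (by lia), if_neg, mul_zero]
    rwa [dvd_iff j (mem_range_succ_iff.1 hj)]
  · intro hn
    rw [Nat.choose_eq_zero_of_lt (by simpa using hn), Nat.cast_zero, mul_zero, zero_mul]

end PowerSums

section QuarticCharacter

lemma sqrtd_pow_two_mul_add (n r : ℕ) :
    (Zsqrtd.sqrtd : GaussianInt) ^ (2 * n + r) = (-1) ^ n * Zsqrtd.sqrtd ^ r := by
  rw [pow_add, pow_mul, sq, Zsqrtd.dmuld, Int.cast_neg, Int.cast_one]

variable {F : Type*} [Field F] {α : F}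

lemma IsPrimitiveElt.exists_quarticChar [Fintype F] (hα : IsPrimitiveElt α)
    (hF : Fintype.card F % 4 = 1) : ∃ χ : MulChar F GaussianInt, χ α = Zsqrtd.sqrtd := by
  obtain ⟨l, hl⟩ : ∃ l, Fintype.card F - 1 = 2 * (2 * l) + 0 := ⟨Fintype.card F / 4, by lia⟩
  refine hα.exists_mulChar (by have := Fintype.one_lt_card (α := F); lia) ?_
  rw [hl, sqrtd_pow_two_mul_add, (even_two_mul l).neg_one_pow, pow_zero, one_mul]

variable {χ : MulChar F GaussianInt}

lemma mulChar_mul_self_eq_quadraticChar [Fintype F] [DecidableEq F] (hα : IsPrimitiveElt α)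
    (hF : ringChar F ≠ 2) (hχ : χ α = Zsqrtd.sqrtd) :
    χ * χ = (quadraticChar F).ringHomComp (Int.castRingHom _) := by
  ext x : 1
  obtain ⟨n, hn⟩ := hα x x.ne_zero
  rw [MulChar.mul_apply, MulChar.ringHomComp_apply, ← hn, hα.quadraticChar_pow hF, map_pow, hχ,
    ← pow_add, ← two_mul, ← add_zero (2 * n), sqrtd_pow_two_mul_add]
  simp

lemma mulChar_mul_self_ne_one [Finite F] (hα : IsPrimitiveElt α)
    (hF : ringChar F ≠ 2) (hχ : χ α = Zsqrtd.sqrtd) : χ * χ ≠ 1 := by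
  classical
  have := Fintype.ofFinite F
  rw [mulChar_mul_self_eq_quadraticChar hα hF hχ,
    MulChar.ringHomComp_ne_one_iff (RingHom.injective_int _)]
  exact quadraticChar_ne_one hF

lemma mulChar_ne_one_of_apply_eq_sqrtd [Finite F] (hα : IsPrimitiveElt α)
    (hF : ringChar F ≠ 2) (hχ : χ α = Zsqrtd.sqrtd) : χ ≠ 1 := by
  rintro rfl
  exact mulChar_mul_self_ne_one hα hF hχ (one_mul 1)

variable [Fintype F]

lemma jacobiSum_self_re_sq_add_im_sq (hα : IsPrimitiveElt α) (hF : ringChar F ≠ 2)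
    (hχ : χ α = Zsqrtd.sqrtd) :
    (jacobiSum χ χ).re ^ 2 + (jacobiSum χ χ).im ^ 2 = Fintype.card F := by
  have χ_ne_one := mulChar_ne_one_of_apply_eq_sqrtd hα hF hχ
  rw [← norm_jacobiSum χ_ne_one χ_ne_one (mulChar_mul_self_ne_one hα hF hχ), Zsqrtd.norm_def]
  ring

lemma mulChar_neg_one_of_apply_eq_sqrtd (hα : IsPrimitiveElt α) (hF : Fintype.card F % 8 = 5)
    (hχ : χ α = Zsqrtd.sqrtd) : χ (-1) = -1 := by
  obtain ⟨l, hl⟩ : ∃ l, Fintype.card F = 8 * l + 5 := ⟨Fintype.card F / 8, by lia⟩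
  rw [← hα.pow_half (n := 2 * (2 * l + 1) + 0) (by lia) (by lia), map_pow, hχ,
    sqrtd_pow_two_mul_add, pow_zero, mul_one, (odd_two_mul_add_one l).neg_one_pow]

lemma mulChar_inv_four (hα : IsPrimitiveElt α) (hF : Fintype.card F % 8 = 5)
    (hχ : χ α = Zsqrtd.sqrtd) : χ 4⁻¹ = -1 := by
  classical
  have hF2 : ringChar F ≠ 2 := mt FiniteField.even_card_iff_char_two.1 (by lia)
  have quadraticChar_two : quadraticChar F 2⁻¹ = -1 := by
    rw [quadraticChar_neg_one_iff_not_isSquare, isSquare_inv, FiniteField.isSquare_two_iff]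
    lia
  rw [show (4 : F)⁻¹ = 2⁻¹ * 2⁻¹ by rw [← mul_inv]; norm_num, map_mul, ← MulChar.mul_apply,
    mulChar_mul_self_eq_quadraticChar hα hF2 hχ, MulChar.ringHomComp_apply, quadraticChar_two]
  rfl

lemma jacobiSum_self_emod_four (hα : IsPrimitiveElt α) (hF : Fintype.card F % 8 = 5)
    (hχ : χ α = Zsqrtd.sqrtd) :
    (jacobiSum χ χ).re % 4 = 3 ∧ (jacobiSum χ χ).im % 4 = 2 := by
  have hF2 : ringChar F ≠ 2 := mt FiniteField.even_card_iff_char_two.1 (by lia)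
  have sqrtd_sub_one_dvd (x : F) (hx : x ≠ 0) : (Zsqrtd.sqrtd - 1 : GaussianInt) ∣ χ x - 1 := by
    obtain ⟨n, rfl⟩ := hα x hx
    rw [map_pow, hχ]
    simpa only [one_pow] using sub_dvd_pow_sub_pow (Zsqrtd.sqrtd : GaussianInt) 1 n
  obtain ⟨z, hz⟩ := two_mul_dvd_jacobiSum_self_sub hF2 sqrtd_sub_one_dvd
  rw [mulChar_inv_four hα hF hχ] at hz
  have norm_eq := jacobiSum_self_re_sq_add_im_sq hα hF2 hχ
  have re_eq : (jacobiSum χ χ).re = Fintype.card F - 4 - 2 * (z.re + z.im) := by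
    have := congrArg Zsqrtd.re hz
    simp only [Zsqrtd.re_sub, Zsqrtd.re_add, Zsqrtd.re_natCast, Zsqrtd.re_ofNat, Zsqrtd.re_neg,
      Zsqrtd.re_one, Zsqrtd.re_mul, Zsqrtd.im_mul, Zsqrtd.im_sub, Zsqrtd.re_sqrtd, Zsqrtd.im_sqrtd,
      Zsqrtd.im_one, Zsqrtd.im_ofNat] at this
    lia
  have im_eq : (jacobiSum χ χ).im = 2 * (z.re - z.im) := by
    have := congrArg Zsqrtd.im hz
    simp only [Zsqrtd.im_sub, Zsqrtd.im_add, Zsqrtd.im_natCast, Zsqrtd.im_ofNat, Zsqrtd.im_neg,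
      Zsqrtd.im_one, Zsqrtd.im_mul, Zsqrtd.re_mul, Zsqrtd.re_sub, Zsqrtd.re_sqrtd, Zsqrtd.im_sqrtd,
      Zsqrtd.re_one, Zsqrtd.re_ofNat] at this
    lia
  have im_mod := emod_four_eq_two_of_sq_add_sq (b := (jacobiSum χ χ).im)
    (by rw [norm_eq]; exact_mod_cast hF) (by lia)
  exact ⟨by lia, im_mod⟩

variable [DecidableEq F]

lemma signFun_cycClass_one_union_two (hα : IsPrimitiveElt α) (hF : Fintype.card F % 4 = 1)
    (hχ : χ α = Zsqrtd.sqrtd) (x : F) :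
    signFun (cycClass α 4 1 ∪ cycClass α 4 2) x = imSubRe (χ x) := by
  have two_lt_card : 2 < Fintype.card F := by have := Fintype.one_lt_card (α := F); lia
  by_cases hx : x = 0
  · simp [signFun, hx, χ.map_zero]
  · obtain ⟨n, rfl⟩ := hα x hx
    have mem_iff (i : ℕ) : α ^ n ∈ cycClass α 4 i ↔ n ≡ i [MOD 4] :=
      hα.pow_mem_cycClass_iff two_lt_card (by lia)
    obtain ⟨l, r, hr, rfl⟩ : ∃ l r, r < 4 ∧ n = 2 * (2 * l) + r :=
      ⟨n / 4, n % 4, Nat.mod_lt _ (by lia), by lia⟩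
    rw [map_pow, hχ, sqrtd_pow_two_mul_add, (even_two_mul l).neg_one_pow, one_mul]
    simp only [signFun, hx, if_false, mem_union, mem_iff]
    have mod_four : (2 * (2 * l) + r) % 4 = r := by lia
    simp only [Nat.ModEq, mod_four]
    interval_cases r <;> rfl

lemma sum_signFun_cycClass_one_union_two (hα : IsPrimitiveElt α) (hF : Fintype.card F % 8 = 5)
    (hχ : χ α = Zsqrtd.sqrtd) {d : F} (hd : d ≠ 0) :
    ∑ x, signFun (cycClass α 4 1 ∪ cycClass α 4 2) x *
      signFun (cycClass α 4 1 ∪ cycClass α 4 2) (x - d) =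
        -1 + quadraticChar F d * (jacobiSum χ χ).im := by
  have hF2 : ringChar F ≠ 2 := mt FiniteField.even_card_iff_char_two.1 (by lia)
  have mul_neg_eq : χ d * χ (-d) = ((-quadraticChar F d : ℤ) : GaussianInt) := by
    have : χ d * χ d = (quadraticChar F d : ℤ) := by
      rw [← MulChar.mul_apply, mulChar_mul_self_eq_quadraticChar hα hF2 hχ]
      rfl
    rw [neg_eq_neg_one_mul d, map_mul, mulChar_neg_one_of_apply_eq_sqrtd hα hF hχ, Int.cast_neg,
      ← this]
    ring
  simp only [signFun_cycClass_one_union_two hα (by lia : Fintype.card F % 4 = 1) hχ]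
  rw [sum_imSubRe_mul_shift (mulChar_ne_one_of_apply_eq_sqrtd hα hF2 hχ) hd, mul_neg_eq,
    Zsqrtd.im_smul]
  ring

end QuarticCharacter

section KatreRajwade

variable {F : Type*} [Field F] {α : F}

lemma mulChar_apply_eq_pow {ψ : MulChar F F} {n : ℕ} (hα : IsPrimitiveElt α) (hn : n ≠ 0)
    (hψ : ψ α = α ^ n) (x : F) : ψ x = x ^ n := by
  by_cases hx : x = 0
  · rw [hx, zero_pow hn, ψ.map_zero]
  · obtain ⟨l, rfl⟩ := hα x hx
    rw [map_pow, hψ, pow_right_comm]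

variable [Fintype F]

lemma ringHom_jacobiSum_self {R : Type*} [CommRing R] {χ : MulChar F R} {φ : R →+* F} {n : ℕ}
    (hα : IsPrimitiveElt α) (hn : n ≠ 0) (hχ : φ (χ α) = α ^ n) :
    φ (jacobiSum χ χ) = ∑ x, x ^ n * (1 - x) ^ n := by
  rw [← jacobiSum_ringHomComp, jacobiSum]
  simp only [mulChar_apply_eq_pow (ψ := χ.ringHomComp φ) hα hn hχ]

lemma cast_jacobiSum_self {χ : MulChar F GaussianInt} {n : ℕ} (hα : IsPrimitiveElt α)
    (hχ : χ α = Zsqrtd.sqrtd) (hn : n ≠ 0) (hαn : α ^ n * α ^ n = -1) :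
    ((jacobiSum χ χ).re + (jacobiSum χ χ).im * α ^ n : F) = ∑ x, x ^ n * (1 - x) ^ n := by
  let φ : GaussianInt →+* F := Zsqrtd.lift ⟨α ^ n, by rw [hαn, Int.cast_neg, Int.cast_one]⟩
  have apply_φ (z : GaussianInt) : φ z = z.re + z.im * α ^ n := rfl
  rw [← apply_φ]
  refine ringHom_jacobiSum_self hα hn ?_
  simp [hχ, apply_φ]

lemma re_sub_im_mul_jacobiSum_self_ne_zero {χ : MulChar F GaussianInt} {p m k : ℕ} (hp : p.Prime)
    (hFpm : Fintype.card F = p ^ m) (hF : Fintype.card F % 8 = 5) (hα : IsPrimitiveElt α)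
    (hχ : χ α = Zsqrtd.sqrtd) (hk : Fintype.card F = 4 * k + 1) :
    ((jacobiSum χ χ).re - (jacobiSum χ χ).im * α ^ k : F) ≠ 0 := by
  have := Fact.mk hp
  have := charP_of_card_eq_prime_pow hFpm
  have pow_sq : α ^ k * α ^ k = -1 := by
    rw [← pow_add, ← two_mul]
    exact hα.pow_half (by lia) (by lia)
  have pow_cube : α ^ (3 * k) = -α ^ k := by
    rw [mul_comm, pow_mul, pow_succ, sq, pow_sq, neg_one_mul]
  have cast_eq := cast_jacobiSum_self (n := 3 * k) hα hχ (by lia)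
    (by rw [pow_cube, neg_mul_neg, pow_sq])
  rw [sub_eq_add_neg, ← mul_neg, ← pow_cube, cast_eq,
    sum_pow_mul_one_sub_pow_eq (n := k) (by lia) (by lia) (by lia), neg_ne_zero]
  refine mul_ne_zero (pow_ne_zero _ (neg_ne_zero.2 one_ne_zero)) ?_
  rw [Ne, CharP.cast_eq_zero_iff F p]
  exact not_dvd_choose_of_pow_mod_eight hp (hFpm ▸ hk) (hFpm ▸ hF)

lemma jacobiSum_self_im_eq {χ : MulChar F GaussianInt} {p m : ℕ} {s t : ℤ} (hp : p.Prime)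
    (hFpm : Fintype.card F = p ^ m) (hF : Fintype.card F % 8 = 5) (hα : IsPrimitiveElt α)
    (hχ : χ α = Zsqrtd.sqrtd) (hst : (Fintype.card F : ℤ) = s ^ 2 + t ^ 2)
    (hps : ¬ (p : ℤ) ∣ s) (hs : s % 4 = 1)
    (ht : (t : F) * α ^ ((Fintype.card F - 1) / 4) = s) : (jacobiSum χ χ).im = t := by
  have := Fact.mk hp
  have := charP_of_card_eq_prime_pow hFpm
  obtain ⟨k, hk⟩ : ∃ k, Fintype.card F = 4 * k + 1 := ⟨Fintype.card F / 4, by lia⟩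
  rw [hk, Nat.add_sub_cancel, Nat.mul_div_cancel_left _ four_pos] at ht
  obtain ⟨re_mod, im_mod⟩ := jacobiSum_self_emod_four hα hF hχ
  have norm_eq : (p : ℤ) ^ m = (jacobiSum χ χ).re ^ 2 + (jacobiSum χ χ).im ^ 2 := by
    rw [jacobiSum_self_re_sq_add_im_sq hα (mt FiniteField.even_card_iff_char_two.1 (by lia)) hχ,
      hFpm, Nat.cast_pow]
  refine eq_of_sq_add_sq_eq_pow hp ?_ norm_eq ?_ hs re_mod im_mod
  · rw [← hst, hFpm, Nat.cast_pow]
  rw [← CharP.intCast_eq_zero_iff F p] at hps ⊢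
  have sub_mul_eq : (((jacobiSum χ χ).re * t - (jacobiSum χ χ).im * s : ℤ) : F) =
      t * ((jacobiSum χ χ).re - (jacobiSum χ χ).im * α ^ k) := by
    push_cast
    rw [← ht]
    ring
  rw [sub_mul_eq]
  refine mul_ne_zero (fun h ↦ hps (by rw [← ht, h, zero_mul])) ?_
  exact re_sub_im_mul_jacobiSum_self_ne_zero hp hFpm hF hα hχ hk

end KatreRajwade

section SkewPDS

variable {F : Type*} [Field F] [Fintype F] [DecidableEq F] {α : F} {χ : MulChar F GaussianInt}

lemma quadraticChar_neg_apply (hF : Fintype.card F % 4 = 1) (x : F) :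
    quadraticChar F (-x) = quadraticChar F x := by
  rw [neg_eq_neg_one_mul, map_mul,
    quadraticChar_neg_one (mt FiniteField.even_card_iff_char_two.1 (by lia)),
    ZMod.χ₄_nat_one_mod_four hF, one_mul]

lemma isSkewPDS_cycClass_one_union_two (hα : IsPrimitiveElt α) (hF : Fintype.card F % 8 = 5)
    (hχ : χ α = Zsqrtd.sqrtd) {i : ℕ} (him : (jacobiSum χ χ).im = -2 * (-1) ^ i) :
    IsSkewPDS (cycClass α 4 1 ∪ cycClass α 4 2) (cycClass α 2 i) (Fintype.card F)
      ((Fintype.card F - 1) / 2) ((Fintype.card F - 5) / 4) ((Fintype.card F - 1) / 4) := by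
  have hF2 : ringChar F ≠ 2 := mt FiniteField.even_card_iff_char_two.1 (by lia)
  have zero_notMem := hα.zero_notMem_cycClass (by have := Fintype.one_lt_card (α := F); lia)
  have signFun_quartic := signFun_cycClass_one_union_two hα (by lia) hχ
  have signFun_square (x : F) := hα.signFun_cycClass_two hF2 i x
  refine isSkewPDS_of_signFun ?_ ?_ ?_ ?_ (fun d hd ↦ ?_) fun d hd ↦ ?_
  · exact notMem_union.2 ⟨zero_notMem 4 1, zero_notMem 4 2⟩
  · exact zero_notMem 2 i
  · simp only [signFun_quartic]
    rw [← map_sum, MulChar.sum_eq_zero_of_ne_one (mulChar_ne_one_of_apply_eq_sqrtd hα hF2 hχ),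
      map_zero]
  · simp only [signFun_square]
    rw [← mul_sum, quadraticChar_sum_zero hF2, mul_zero]
  · have signFun_neg : signFun (cycClass α 4 1 ∪ cycClass α 4 2) (-d) =
        -signFun (cycClass α 4 1 ∪ cycClass α 4 2) d := by
      rw [signFun_quartic, signFun_quartic, neg_eq_neg_one_mul d, map_mul,
        mulChar_neg_one_of_apply_eq_sqrtd hα hF hχ, neg_one_mul, map_neg]
    rw [sum_signFun_cycClass_one_union_two hα hF hχ hd, signFun_neg, signFun_square, him]
    ring
  · simp only [signFun_square]
    rw [quadraticChar_neg_apply (by lia)]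
    have (x : F) : (-1) ^ i * quadraticChar F x * ((-1) ^ i * quadraticChar F (x - d)) =
        quadraticChar F x * quadraticChar F (x - d) := by
      rw [mul_mul_mul_comm, ← pow_add, Even.neg_one_pow ⟨i, rfl⟩, one_mul]
    simp only [this]
    rw [sum_quadraticChar_mul_shift hF2 hd]
    ring

lemma isSkewPDS_cycClass_one_union_two_union_zero (hα : IsPrimitiveElt α)
    (hF : Fintype.card F % 8 = 5) (hχ : χ α = Zsqrtd.sqrtd) {i j : ℕ} (hij : i % 2 ≠ j % 2)
    (him : (jacobiSum χ χ).im = -2 * (-1) ^ i) :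
    IsSkewPDS (cycClass α 4 1 ∪ cycClass α 4 2 ∪ {0}) (cycClass α 2 j ∪ {0}) (Fintype.card F)
      ((Fintype.card F + 1) / 2) ((Fintype.card F + 3) / 4) ((Fintype.card F - 1) / 4) := by
  have neg_image : (cycClass α 4 1 ∪ cycClass α 4 2).image (fun x ↦ -x) =
      cycClass α 4 0 ∪ cycClass α 4 3 := by
    rw [← hα.image_neg_cycClass_zero_union_three hF, image_image]
    simp
  have := (isSkewPDS_cycClass_one_union_two hα hF hχ him).neg.compl (n := 1) (by lia)
  rw [neg_image, hα.compl_cycClass_zero_union_three (by lia),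
    hα.compl_cycClass_two (by lia) hij] at this
  convert this using 1 <;> lia

end SkewPDS

/-- For a prime power `q = p^m ≡ 5 (mod 8)` with Katre–Rajwade normalized
representation `q = s² + t²`, `t = ±2`, and `D = C_0^4 ∪ C_3^4`:
(i) `F_q^* \ D = -D = C_1^4 ∪ C_2^4` is a Paley skew PDS corresponding to `C_0^2` if
`t = -2` and to `C_1^2` if `t = 2`;
(ii) `F_q \ D = C_1^4 ∪ C_2^4 ∪ {0}` is a skew PDS corresponding to the
`(q,(q+1)/2,(q+3)/4,(q-1)/4)`-PDS `C_1^2 ∪ {0}` if `t = -2` and to `C_0^2 ∪ {0}` if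
`t = 2`. -/
theorem stmt_3 {F : Type*} [Field F] [Fintype F] [DecidableEq F]
    (q p m : ℕ) (hp : p.Prime) (hq : Fintype.card F = q) (hqpm : q = p ^ m)
    (hq8 : q % 8 = 5)
    (α : F) (hα : IsPrimitiveElt α)
    (s t : ℤ) (hst : (q : ℤ) = s ^ 2 + t ^ 2)
    (hps : ¬((p : ℤ) ∣ s)) (hs4 : s % 4 = 1)
    (ht : (t : F) * α ^ ((q - 1) / 4) = (s : F))
    (ht2 : t = -2 ∨ t = 2) :
    (Gstar F \ (cycClass α 4 0 ∪ cycClass α 4 3) =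
        (cycClass α 4 0 ∪ cycClass α 4 3).image (fun x => -x)) ∧
    ((cycClass α 4 0 ∪ cycClass α 4 3).image (fun x => -x) =
        cycClass α 4 1 ∪ cycClass α 4 2) ∧
    (t = -2 → IsSkewPDS (cycClass α 4 1 ∪ cycClass α 4 2) (cycClass α 2 0)
        q ((q - 1) / 2) ((q - 5) / 4) ((q - 1) / 4)) ∧
    (t = 2 → IsSkewPDS (cycClass α 4 1 ∪ cycClass α 4 2) (cycClass α 2 1)
        q ((q - 1) / 2) ((q - 5) / 4) ((q - 1) / 4)) ∧
    (Finset.univ \ (cycClass α 4 0 ∪ cycClass α 4 3) =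
        cycClass α 4 1 ∪ cycClass α 4 2 ∪ {0}) ∧
    (t = -2 → IsSkewPDS (cycClass α 4 1 ∪ cycClass α 4 2 ∪ {0})
        (cycClass α 2 1 ∪ {0}) q ((q + 1) / 2) ((q + 3) / 4) ((q - 1) / 4)) ∧
    (t = 2 → IsSkewPDS (cycClass α 4 1 ∪ cycClass α 4 2 ∪ {0})
        (cycClass α 2 0 ∪ {0}) q ((q + 1) / 2) ((q + 3) / 4) ((q - 1) / 4)) := by
  subst hq
  have neg_eq := hα.image_neg_cycClass_zero_union_three hq8
  have compl_eq := hα.compl_cycClass_zero_union_three (by lia)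
  have Gstar_sdiff_eq := hα.Gstar_sdiff_cycClass_zero_union_three (by lia)
  obtain ⟨χ, hχ⟩ := hα.exists_quarticChar (by lia)
  have im_eq := jacobiSum_self_im_eq hp hqpm hq8 hα hχ hst hps hs4 ht
  have im_eq_zero (h : t = -2) : (jacobiSum χ χ).im = -2 * (-1) ^ 0 := by rw [im_eq, h]; rfl
  have im_eq_one (h : t = 2) : (jacobiSum χ χ).im = -2 * (-1) ^ 1 := by rw [im_eq, h]; rfl
  exact ⟨Gstar_sdiff_eq.trans neg_eq.symm, neg_eq,
    fun h ↦ isSkewPDS_cycClass_one_union_two hα hq8 hχ (im_eq_zero h),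
    fun h ↦ isSkewPDS_cycClass_one_union_two hα hq8 hχ (im_eq_one h),
    (compl_eq_univ_sdiff _).symm.trans compl_eq,
    fun h ↦ isSkewPDS_cycClass_one_union_two_union_zero hα hq8 hχ (by decide) (im_eq_zero h),
    fun h ↦ isSkewPDS_cycClass_one_union_two_union_zero hα hq8 hχ (by decide) (im_eq_one h)⟩
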